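/- Let G be a connected d-regular graph. There is no vertex y of G such that deg₂(y) = 3, N₂'(y) = {x} for some vertex x, and x has exactly one neighbor in the connected component of G − x containing y. (Equivalently: if deg₂(y) = 3 and |N₂'(y)| = 1 with N₂'(y) = {x}, then x has at least two neighbors in the component of G − x containing y.) -/

import Mathlib

open SimpleGraph

variable {V : Type*}

/-- The set of vertices at distance exactly `i` from `v`. -/
def distSet (G : SimpleGraph V) (v : V) (i : ℕ) : Set V := {u | G.dist v u = i}

/-- `deg₂ v` : the number of vertices at distance exactly 2 from `v`. -/
noncomputable def deg2 (G : SimpleGraph V) (v : V) : ℕ := (distSet G v 2).ncard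

/-- `N₂'(v)` : vertices at distance 2 from `v` that are adjacent to a vertex at
distance 3 from `v`. -/
def N2' (G : SimpleGraph V) (v : V) : Set V :=
  {u | G.dist v u = 2 ∧ ∃ w, G.dist v w = 3 ∧ G.Adj u w}

/-- The square of `G` : an edge between `u` and `v` whenever `1 ≤ d(u,v) ≤ 2`. -/
def graphSquare (G : SimpleGraph V) : SimpleGraph V where
  Adj u v := 1 ≤ G.dist u v ∧ G.dist u v ≤ 2
  symm := by
    constructor
    intro u v h
    rwa [SimpleGraph.dist_comm]
  loopless := by
    constructor
    intro v h
    simp [SimpleGraph.dist_self] at h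

/-- `G` is `d`-regular : every vertex has exactly `d` neighbors. -/
def IsRegularGraph (G : SimpleGraph V) (d : ℕ) : Prop :=
  ∀ v, (G.neighborSet v).ncard = d

/-- The vertex set of the connected component of `G - u` containing `v` :
all vertices reachable from `v` by a walk avoiding `u`. -/
def compDel (G : SimpleGraph V) (u v : V) : Set V :=
  {w | ∃ p : G.Walk v w, u ∉ p.support}

/-!
Adding `x` to the component `C` of `G - x` containing `y` gives the ball of radius 2 around `y`: a
walk can leave this ball only through `N2' G y = {x}`, and a geodesic from `y` to another vertex of
the ball avoids `x`. Hence `|C| = d + deg2 G y`. In the subgraph induced on the ball, every vertex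
of `C` keeps its full degree `d`, while `x` has degree `m`, its number of neighbors in `C`. By the
handshake lemma `d * (d + deg2 G y) + m` is even, which forces `m` to be even as soon as `deg2 G y`
is odd.
-/

section

variable {G : SimpleGraph V} {d : ℕ} {v w x y : V}

lemma even_sum_ncard_neighborSet_inter (G : SimpleGraph V) (S : Finset V) :
    Even (∑ v ∈ S, (G.neighborSet v ∩ S).ncard) := by
  classical
  have hdegree (v : (S : Set V)) :
      (G.induce (S : Set V)).degree v = (G.neighborSet v ∩ S).ncard := by
    rw [← card_neighborSet_eq_degree, Set.fintypeCard_eq_ncard, neighborSet_induce]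
    exact Set.ncard_subtype (· ∈ S) (G.neighborSet v)
  rw [← Finset.sum_finset_coe, ← Finset.sum_congr rfl fun v _ ↦ hdegree v,
    sum_degrees_eq_twice_card_edges]
  exact even_two_mul _

lemma even_sum_ncard_neighborSet_add_ncard_inter {S : Finset V} (hx : x ∉ S)
    (hS : ∀ v ∈ S, G.neighborSet v ⊆ insert x ↑S) :
    Even (∑ v ∈ S, (G.neighborSet v).ncard + (G.neighborSet x ∩ S).ncard) := by
  classical
  have hhandshake := even_sum_ncard_neighborSet_inter G (insert x S)
  have hinter (v : V) (hv : v ∈ S) : G.neighborSet v ∩ ↑(insert x S) = G.neighborSet v := by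
    simpa only [Finset.coe_insert, Set.inter_eq_left] using hS v hv
  have hinter_x : G.neighborSet x ∩ ↑(insert x S) = G.neighborSet x ∩ S := by
    rw [Finset.coe_insert, Set.inter_insert_of_notMem G.notMem_neighborSet_self]
  rwa [Finset.sum_insert hx, hinter_x, Finset.sum_congr rfl fun v hv ↦ by rw [hinter v hv],
    add_comm] at hhandshake

lemma notMem_compDel : x ∉ compDel G x y := fun ⟨p, hp⟩ ↦ hp p.end_mem_support

lemma neighborSet_subset_insert_compDel (hv : v ∈ compDel G x y) :
    G.neighborSet v ⊆ insert x (compDel G x y) := by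
  obtain ⟨p, hp⟩ := hv
  refine fun w (hvw : G.Adj v w) ↦ or_iff_not_imp_left.2 fun hwx ↦ ⟨p.concat hvw, ?_⟩
  simp [Walk.support_concat, hp, Ne.symm hwx]

lemma IsRegularGraph.even_mul_ncard_compDel_add (hreg : IsRegularGraph G d)
    (hfin : (compDel G x y).Finite) :
    Even (d * (compDel G x y).ncard + (G.neighborSet x ∩ compDel G x y).ncard) := by
  have h := even_sum_ncard_neighborSet_add_ncard_inter (G := G) (x := x) (S := hfin.toFinset)
    (by simpa only [Set.Finite.mem_toFinset] using notMem_compDel)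
    (by simpa only [Set.Finite.mem_toFinset, Set.Finite.coe_toFinset] using
      fun v ↦ neighborSet_subset_insert_compDel)
  rwa [Finset.sum_congr rfl fun v _ ↦ hreg v, Finset.sum_const, smul_eq_mul, mul_comm,
    ← Set.ncard_eq_toFinset_card _ hfin, hfin.coe_toFinset] at h

lemma mem_compDel_of_dist_le (hw : G.Reachable y w) (hwx : w ≠ x)
    (hle : G.dist y w ≤ G.dist y x) : w ∈ compDel G x y := by
  classical
  obtain ⟨p, hp⟩ := hw.exists_walk_length_eq_dist
  refine ⟨p, fun hxp ↦ ?_⟩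
  have hlt : G.dist y x < G.dist y w :=
    calc G.dist y x ≤ (p.takeUntil x hxp).length := dist_le _
      _ < p.length := Walk.length_takeUntil_lt_length hxp hwx.symm
      _ = G.dist y w := hp
  exact hlt.not_ge hle

lemma dist_le_two_of_mem_compDel (hN : N2' G y ⊆ {x}) (hw : w ∈ compDel G x y) :
    G.dist y w ≤ 2 := by
  obtain ⟨p, hp⟩ := hw
  by_contra hfar
  obtain ⟨e, he, hfst, hsnd⟩ := p.exists_boundary_dart {u | G.dist y u ≤ 2} (by simp) hfar
  simp only [Set.mem_ofPred_eq, not_le] at hfst hsnd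
  have hstep := e.adj.diff_dist_adj (u := y)
  have hexit : e.fst ∈ N2' G y := ⟨by lia, e.snd, by lia, e.adj⟩
  exact hp (hN hexit ▸ p.dart_fst_mem_support_of_mem_darts he)

lemma insert_compDel_eq (hN : N2' G y = {x}) :
    insert x (compDel G x y) = insert y (G.neighborSet y ∪ distSet G y 2) := by
  have hx : G.dist y x = 2 := (hN.ge rfl).1
  refine subset_antisymm (Set.insert_subset (.inr (.inr hx)) fun w hw ↦ ?_) fun w hw ↦ ?_
  · have hle := dist_le_two_of_mem_compDel hN.le hw
    obtain ⟨p, -⟩ := hw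
    obtain h | h | h : G.dist y w = 0 ∨ G.dist y w = 1 ∨ G.dist y w = 2 := by lia
    · exact .inl (p.reachable.dist_eq_zero_iff.1 h).symm
    · exact .inr (.inl (dist_eq_one_iff_adj.1 h))
    · exact .inr (.inr h)
  · obtain ⟨hreach, hle⟩ : G.Reachable y w ∧ G.dist y w ≤ 2 := by
      obtain rfl | hadj | h := hw
      · exact ⟨.rfl, by simp⟩
      · exact ⟨hadj.reachable, (dist_eq_one_iff_adj.2 hadj).trans_le one_le_two⟩
      · exact ⟨.of_dist_ne_zero (h.trans_ne two_ne_zero), h.le⟩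
    exact or_iff_not_imp_left.2 fun hwx ↦ mem_compDel_of_dist_le hreach hwx (hle.trans hx.ge)

lemma finite_compDel (hN : N2' G y = {x}) (hfin₁ : (G.neighborSet y).Finite)
    (hfin₂ : (distSet G y 2).Finite) : (compDel G x y).Finite :=
  ((hfin₁.union hfin₂).insert y).subset <| insert_compDel_eq hN ▸ Set.subset_insert x _

lemma ncard_compDel (hN : N2' G y = {x}) (hfin₁ : (G.neighborSet y).Finite)
    (hfin₂ : (distSet G y 2).Finite) :
    (compDel G x y).ncard = (G.neighborSet y).ncard + deg2 G y := by
  have hdisj : Disjoint (G.neighborSet y) (distSet G y 2) :=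
    Set.disjoint_left.2 fun w hadj hw ↦ by
      have := (dist_eq_one_iff_adj.2 hadj).symm.trans hw
      lia
  have hy : y ∉ G.neighborSet y ∪ distSet G y 2 := by simp [distSet]
  have hcard := congrArg Set.ncard (insert_compDel_eq hN)
  rwa [Set.ncard_insert_of_notMem notMem_compDel (finite_compDel hN hfin₁ hfin₂),
    Set.ncard_insert_of_notMem hy (hfin₁.union hfin₂), Set.ncard_union_eq hdisj hfin₁ hfin₂,
    Nat.add_right_cancel_iff] at hcard

theorem stmt17_general (hreg : IsRegularGraph G d) (hfin : (G.neighborSet y).Finite)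
    (hodd : Odd (deg2 G y)) (hN : N2' G y = {x}) :
    Even (G.neighborSet x ∩ compDel G x y).ncard := by
  have hfin₂ : (distSet G y 2).Finite := Set.finite_of_ncard_pos hodd.pos
  have heven := hreg.even_mul_ncard_compDel_add (finite_compDel hN hfin hfin₂)
  rw [ncard_compDel hN hfin hfin₂, hreg y] at heven
  have hprod : Even (d * (d + deg2 G y)) :=
    d.even_or_odd.elim (·.mul_right _) fun hd ↦ (hd.add_odd hodd).mul_left d
  exact (Nat.even_add.1 heven).1 hprod

end

/-- Let `G` be a connected `d`-regular graph. There is no vertex `y` with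
`deg₂(y) = 3` and `N₂'(y) = {x}` such that `x` has exactly one neighbor in the connected
component of `G - x` containing `y`. -/
theorem stmt17 {V : Type*} [Fintype V] (G : SimpleGraph V) (d : ℕ)
    (hconn : G.Connected) (hreg : IsRegularGraph G d) :
    ¬ ∃ (y x : V), deg2 G y = 3 ∧ N2' G y = {x} ∧
      (G.neighborSet x ∩ compDel G x y).ncard = 1 := by
  rintro ⟨y, x, h2, hN, h1⟩
  have := stmt17_general hreg (Set.toFinite _) (h2 ▸ by decide) hN
  simp [h1] at this
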